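/- arXiv:math/0410203 — 6 statements merged into one kernel-verified Lean document; each statement's English description precedes it below -/
import Mathlib

section
/- Let x be a real number with |x| < 1, let d be a natural number, let P ∈ ℝ[X] be a polynomial of degree at most d, and let a be a natural number. Then the family (P(n)·x^n)_{n ≥ a} is summable, and ∑_{n ≥ a} P(n) x^n = ∑_{i=0}^{d} (Δ^i P)(a) · x^{a+i} / (1 − x)^{i+1}, where Δ is the forward difference operator (ΔQ)(X) = Q(X+1) − Q(X) and Δ^i is its i-th iterate (with Δ^0 Q = Q). -/
/-- The forward difference operator on polynomials: `(ΔQ)(X) = Q(X+1) - Q(X)`. -/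
noncomputable def polyFwdDiff (Q : Polynomial ℝ) : Polynomial ℝ :=
  Q.comp (Polynomial.X + 1) - Q

/-!
For a function whose differences at `y` eventually vanish, Newton's formula
`f (y + n • h) = ∑ i < N, (n.choose i) • Δ^i f y` has a number of terms independent of `n`.
Multiplying by `x ^ n` and summing over `n` therefore reduces the claim to the generating functions
`∑ n, (n.choose i) x ^ n = x ^ i / (1 - x) ^ (i + 1)`.
-/

open Finset Polynomial
open scoped fwdDiff Ring

theorem shift_eq_sum_range_fwdDiff_iter_of_eq_zero {M G : Type*} [AddCommMonoid M]
    [AddCommGroup G] {h : M} {f : M → G} {y : M} {N : ℕ}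
    (hf : ∀ i ≥ N, (Δ_[h])^[i] f y = 0) (n : ℕ) :
    f (y + n • h) = ∑ i ∈ range N, n.choose i • (Δ_[h])^[i] f y := by
  have choose_vanishes : ∀ i ≥ n + 1, n.choose i • (Δ_[h])^[i] f y = 0 := fun i hi ↦ by
    rw [Nat.choose_eq_zero_of_lt hi, zero_smul]
  have diff_vanishes : ∀ i ≥ N, n.choose i • (Δ_[h])^[i] f y = 0 := fun i hi ↦ by
    rw [hf i hi, smul_zero]
  calc f (y + n • h)
    _ = ∑ i ∈ range (n + 1), n.choose i • (Δ_[h])^[i] f y := shift_eq_sum_fwdDiff_iter h f n y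
    _ = ∑ i ∈ range (max (n + 1) N), n.choose i • (Δ_[h])^[i] f y :=
      (eventually_constant_sum choose_vanishes (le_max_left _ _)).symm
    _ = ∑ i ∈ range N, n.choose i • (Δ_[h])^[i] f y :=
      eventually_constant_sum diff_vanishes (le_max_right _ _)

section PowerSeries

variable {R : Type*} [NormedRing R] [HasSummableGeomSeries R] {x : R}

theorem hasSum_choose_mul_pow (hx : ‖x‖ < 1) (i : ℕ) :
    HasSum (fun n : ℕ ↦ (n.choose i : R) * x ^ n) (x ^ i * (1 - x)⁻¹ʳ ^ (i + 1)) := by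
  have initial_terms : ∑ n ∈ range i, (n.choose i : R) * x ^ n = 0 :=
    sum_eq_zero fun n hn ↦ by
      rw [Nat.choose_eq_zero_of_lt (mem_range.1 hn), Nat.cast_zero, zero_mul]
  rw [← hasSum_nat_add_iff' i, initial_terms, sub_zero]
  refine ((hasSum_choose_mul_geometric_of_norm_lt_one' i hx).mul_left (x ^ i)).congr_fun
    fun n ↦ ?_
  rw [add_comm n i, pow_add, ← mul_assoc, ← mul_assoc, (Nat.cast_commute _ _).eq]

theorem hasSum_pow_smul_shift {M E : Type*} [AddCommMonoid M] [AddCommGroup E]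
    [TopologicalSpace E] [ContinuousAdd E] [Module R E] [ContinuousSMul R E] (hx : ‖x‖ < 1)
    {h : M} {f : M → E} {y : M} {N : ℕ} (hf : ∀ i ≥ N, (Δ_[h])^[i] f y = 0) :
    HasSum (fun n : ℕ ↦ x ^ n • f (y + n • h))
      (∑ i ∈ range N, (x ^ i * (1 - x)⁻¹ʳ ^ (i + 1)) • (Δ_[h])^[i] f y) := by
  have newton (n : ℕ) : x ^ n • f (y + n • h)
      = ∑ i ∈ range N, ((n.choose i : R) * x ^ n) • (Δ_[h])^[i] f y := by
    simp only [shift_eq_sum_range_fwdDiff_iter_of_eq_zero hf, smul_sum, Nat.cast_comm, mul_smul,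
      Nat.cast_smul_eq_nsmul]
  simpa only [newton] using
    hasSum_sum fun i _ ↦ (hasSum_choose_mul_pow hx i).smul_const ((Δ_[h])^[i] f y)

end PowerSeries

theorem hasSum_subtype_le_iff {α M : Type*} [AddCommMonoid α] [PartialOrder α]
    [CanonicallyOrderedAdd α] [IsLeftCancelAdd α] [AddCommMonoid M] [TopologicalSpace M]
    (a : α) {f : α → M} {s : M} :
    HasSum (fun n : {n // a ≤ n} ↦ f n) s ↔ HasSum (fun m ↦ f (a + m)) s := by
  have shift_bijective :
      Function.Bijective (fun m ↦ ⟨a + m, le_self_add⟩ : α → {n // a ≤ n}) :=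
    ⟨fun _ _ h ↦ add_left_cancel (congrArg Subtype.val h), fun ⟨_, hn⟩ ↦
      (exists_add_of_le hn).imp fun _ h ↦ Subtype.ext h.symm⟩
  exact (Equiv.ofBijective _ shift_bijective).hasSum_iff.symm

theorem eval_polyFwdDiff_iterate (P : ℝ[X]) (i : ℕ) (y : ℝ) :
    (polyFwdDiff^[i] P).eval y = (Δ_[1])^[i] P.eval y := by
  have semiconj : Function.Semiconj (fun Q y ↦ Q.eval y) polyFwdDiff Δ_[(1 : ℝ)] :=
    fun Q ↦ by
      ext y
      simp [polyFwdDiff, fwdDiff]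
  exact congrFun (semiconj.iterate_right i P) y

theorem stmt1_general {R : Type*} [NormedCommRing R] [HasSummableGeomSeries R] {x : R}
    (hx : ‖x‖ < 1) {d : ℕ} {P : R[X]} (hP : P.natDegree ≤ d) (a : ℕ) :
    Summable (fun n : {n : ℕ // a ≤ n} ↦ P.eval ((n : ℕ) : R) * x ^ (n : ℕ)) ∧
    ∑' n : {n : ℕ // a ≤ n}, P.eval ((n : ℕ) : R) * x ^ (n : ℕ)
      = ∑ i ∈ range (d + 1), (Δ_[1])^[i] P.eval (a : R) * x ^ (a + i) * (1 - x)⁻¹ʳ ^ (i + 1) := by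
  have diff_vanishes : ∀ i ≥ d + 1, (Δ_[1])^[i] P.eval (a : R) = 0 := fun i hi ↦
    congrFun (fwdDiff_iter_eq_zero_of_degree_lt (hP.trans_lt hi)) _
  suffices HasSum (fun n : {n : ℕ // a ≤ n} ↦ P.eval ((n : ℕ) : R) * x ^ (n : ℕ))
      (∑ i ∈ range (d + 1), (Δ_[1])^[i] P.eval (a : R) * x ^ (a + i) * (1 - x)⁻¹ʳ ^ (i + 1)) from
    ⟨this.summable, this.tsum_eq⟩
  rw [hasSum_subtype_le_iff a (f := fun n : ℕ ↦ P.eval (n : R) * x ^ n)]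
  convert! (hasSum_pow_smul_shift hx diff_vanishes).mul_left (x ^ a) using 1
  · ext m
    simp only [Nat.cast_add, nsmul_one, smul_eq_mul]
    ring
  · rw [mul_sum]
    refine sum_congr rfl fun i _ ↦ ?_
    rw [smul_eq_mul]
    ring

/-- For a real number `x` with `|x| < 1`, a real polynomial `P` of degree at most `d`,
and a natural number `a`, the family `(P(n) xⁿ)_{n ≥ a}` is summable and
`∑_{n ≥ a} P(n) xⁿ = ∑_{i=0}^{d} (Δⁱ P)(a) · x^(a+i) / (1-x)^(i+1)`. -/
theorem stmt1 (x : ℝ) (hx : |x| < 1) (d : ℕ) (P : Polynomial ℝ) (hP : P.natDegree ≤ d)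
    (a : ℕ) :
    Summable (fun n : {n : ℕ // a ≤ n} => P.eval ((n : ℕ) : ℝ) * x ^ (n : ℕ)) ∧
    ∑' n : {n : ℕ // a ≤ n}, P.eval ((n : ℕ) : ℝ) * x ^ (n : ℕ)
      = ∑ i ∈ Finset.range (d + 1),
          (polyFwdDiff^[i] P).eval (a : ℝ) * x ^ (a + i) / (1 - x) ^ (i + 1) := by
  simpa only [eval_polyFwdDiff_iterate, Ring.inverse_eq_inv', inv_pow, ← div_eq_mul_inv]
    using stmt1_general hx hP a
end

section
/- Let b be a natural number and let n, c be integers with 0 ≤ c < n. Then for every r ∈ {0, 1, …, n−1} there exists a polynomial Q_r ∈ ℚ[X] of degree at most b+1 such that for every natural number a with a ≡ r (mod n), ∑_{0 ≤ i ≤ a, i ≡ c (mod n)} i^b = Q_r(a). -/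
/-!
Bernoulli polynomials, rescaled, solve the difference equation `P (X + n) = P + f` with
`deg P ≤ deg f + 1`. Let `s a` be the least integer `≥ a` congruent to `c` modulo `n`. Then
`s (a + 1) = s a` unless `a ≡ c`, in which case `s` jumps from `a` to `a + n`; hence `P (s a)`
grows by exactly `f a` at each `a ≡ c` and the sum telescopes. On a fixed residue class of `a`,
the difference `s a - a` is constant, so `P (s a)` is a polynomial in `a`.
-/

open Finset Polynomial

section DifferenceEquation

theorem natDegree_bernoulli_le (k : ℕ) : (Polynomial.bernoulli k).natDegree ≤ k :=
  natDegree_sum_le_of_forall_le _ _ fun i _ ↦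
    (natDegree_monomial_le _).trans (Nat.sub_le k i)

theorem taylor_one_bernoulli_succ (k : ℕ) :
    taylor 1 (Polynomial.bernoulli (k + 1)) =
      Polynomial.bernoulli (k + 1) + C ((k : ℚ) + 1) * X ^ k := by
  rw [taylor_apply, C_1, add_comm X, bernoulli_comp_one_add_X]
  simp [nsmul_eq_mul]

variable {R : Type*} [CommRing R] [Algebra ℚ R]

theorem exists_taylor_one_eq_add_X_pow (k : ℕ) :
    ∃ P : R[X], P.natDegree ≤ k + 1 ∧ taylor 1 P = P + X ^ k := by
  let B : ℚ[X] := C ((k : ℚ) + 1)⁻¹ * Polynomial.bernoulli (k + 1)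
  have hB : taylor 1 B = B + X ^ k := by
    have hk : (k : ℚ) + 1 ≠ 0 := by positivity
    simp only [B, taylor_mul, taylor_C, taylor_one_bernoulli_succ, mul_add]
    rw [← mul_assoc, ← C_mul, inv_mul_cancel₀ hk, C_1, one_mul]
  refine ⟨B.map (algebraMap ℚ R), ?_, ?_⟩
  · exact natDegree_map_le.trans ((natDegree_C_mul_le _ _).trans (natDegree_bernoulli_le _))
  · simpa using congr(($hB).map (algebraMap ℚ R))

theorem exists_taylor_one_eq_add (f : R[X]) :
    ∃ P : R[X], P.natDegree ≤ f.natDegree + 1 ∧ taylor 1 P = P + f := by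
  choose P hdeg hP using exists_taylor_one_eq_add_X_pow (R := R)
  refine ⟨∑ k ∈ range (f.natDegree + 1), C (f.coeff k) * P k, ?_, ?_⟩
  · refine natDegree_sum_le_of_forall_le _ _ fun k hk ↦ ?_
    exact (natDegree_C_mul_le _ _).trans ((hdeg k).trans (mem_range.mp hk))
  · simp only [map_sum, taylor_mul, taylor_C, hP, mul_add, sum_add_distrib,
      ← f.as_sum_range_C_mul_X_pow]

theorem exists_taylor_eq_add (h : Rˣ) (f : R[X]) :
    ∃ P : R[X], P.natDegree ≤ f.natDegree + 1 ∧ taylor (h : R) P = P + f := by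
  have natDegree_scale_le (u : R) (p : R[X]) : (p.comp (C u * X)).natDegree ≤ p.natDegree :=
    natDegree_comp_le.trans <|
      mul_le_of_le_one_right (Nat.zero_le _) ((natDegree_C_mul_le u X).trans natDegree_X_le)
  obtain ⟨P, hdeg, hP⟩ := exists_taylor_one_eq_add (f.comp (C (h : R) * X))
  refine ⟨P.comp (C (↑h⁻¹ : R) * X), ?_, ?_⟩
  · exact (natDegree_scale_le _ P).trans (hdeg.trans (by gcongr; exact natDegree_scale_le _ f))
  · have unscale : (C (h : R) * X).comp (C (↑h⁻¹ : R) * X) = X := by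
      simp [← mul_assoc, ← C_mul]
    calc taylor (h : R) (P.comp (C (↑h⁻¹ : R) * X))
        = (taylor 1 P).comp (C (↑h⁻¹ : R) * X) := by
          simp [taylor_apply, comp_assoc, mul_add, ← C_mul]
      _ = P.comp (C (↑h⁻¹ : R) * X) + f := by
          rw [hP, add_comp, comp_assoc, unscale, comp_X]

end DifferenceEquation

section ResidueClass

theorem toIocMod_eq_toIocMod_zero_add_of_modEq {α : Type*} [AddCommGroup α] [LinearOrder α]
    [IsOrderedAddMonoid α] [Archimedean α] {p : α} (hp : 0 < p) {a r : α}
    (h : a ≡ r [PMOD p]) (c : α) :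
    toIocMod hp a c = toIocMod hp 0 (c - r) + a := by
  rw [toIocMod_eq_sub, add_left_inj, toIocMod_eq_toIocMod]
  exact AddCommGroup.modEq_iff_zsmul'.mp (h.sub_left c)

variable {n : ℤ} (hn : 0 < n)

theorem toIcoMod_add_one_left (a c : ℤ) : toIcoMod hn (a + 1) c = toIocMod hn a c := by
  obtain ⟨hlt, hle⟩ := toIocMod_mem_Ioc hn a c
  exact (toIcoMod_eq_iff hn).mpr
    ⟨⟨by lia, by lia⟩, toIocDiv hn a c, (toIocMod_add_toIocDiv_zsmul hn a c).symm⟩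

theorem sum_range_ite_modEq_sub {M : Type*} [AddCommGroup M] (F : ℤ → M) (c : ℤ) (a : ℕ) :
    (∑ i ∈ range a, if (i : ℤ) ≡ c [ZMOD n] then F (i + n) - F i else 0) =
      F (toIcoMod hn a c) - F (toIcoMod hn 0 c) := by
  have jump (i : ℕ) : F (toIcoMod hn (i + 1 : ℕ) c) - F (toIcoMod hn i c) =
      if (i : ℤ) ≡ c [ZMOD n] then F (i + n) - F i else 0 := by
    rw [Nat.cast_succ, toIcoMod_add_one_left]
    split_ifs with h <;> rw [← AddCommGroup.modEq_iff_intModEq] at h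
    · rw [(AddCommGroup.modEq_iff_toIocMod_eq_right hn).mp h,
        (AddCommGroup.modEq_iff_toIcoMod_eq_left hn).mp h]
    · rw [(AddCommGroup.not_modEq_iff_toIcoMod_eq_toIocMod hn).mp h, sub_self]
  rw [← sum_congr rfl fun i _ ↦ jump i, sum_range_sub fun i : ℕ ↦ F (toIcoMod hn i c),
    Nat.cast_zero]

end ResidueClass

theorem stmt2_general {R : Type*} [CommRing R] [Algebra ℚ R] (f : R[X]) {n : ℤ} (hn : 0 < n)
    (c r : ℤ) :
    ∃ Q : R[X], Q.natDegree ≤ f.natDegree + 1 ∧ ∀ a : ℕ, (a : ℤ) ≡ r [ZMOD n] →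
      (∑ i ∈ range (a + 1), if (i : ℤ) ≡ c [ZMOD n] then f.eval (i : R) else 0) =
        Q.eval (a : R) := by
  have n_isUnit : IsUnit (n : R) := by
    simpa using (IsUnit.mk0 (n : ℚ) (by exact_mod_cast hn.ne')).map (algebraMap ℚ R)
  obtain ⟨P, hdeg, hP⟩ := exists_taylor_eq_add n_isUnit.unit f
  have hdiff (i : ℕ) : f.eval (i : R) = P.eval ((i + n : ℤ) : R) - P.eval ((i : ℤ) : R) := by
    simpa [taylor_eval, eq_sub_iff_add_eq', eq_comm] using congr(($hP).eval (i : R))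
  let shift : ℤ := toIocMod hn 0 (c - r)
  let start : ℤ := toIcoMod hn 0 c
  refine ⟨taylor (shift : R) P - C (P.eval (start : R)), ?_, ?_⟩
  · rwa [natDegree_sub_C, natDegree_taylor]
  · intro a ha
    simp only [hdiff]
    rw [sum_range_ite_modEq_sub hn (fun i ↦ P.eval (i : R)), Nat.cast_succ,
      toIcoMod_add_one_left, toIocMod_eq_toIocMod_zero_add_of_modEq hn
        (AddCommGroup.modEq_iff_intModEq.mpr ha)]
    simp [shift, start, taylor_eval, add_comm]

/-- For natural `b` and integers `0 ≤ c < n`, and for each residue `r` with `0 ≤ r < n`,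
there is a polynomial `Q_r ∈ ℚ[X]` of degree at most `b + 1` such that for every natural
number `a ≡ r (mod n)`, `∑_{0 ≤ i ≤ a, i ≡ c (mod n)} i^b = Q_r(a)`. -/
theorem stmt2 (b : ℕ) (n c : ℤ) (hc : 0 ≤ c) (hcn : c < n) :
    ∀ r : ℤ, 0 ≤ r → r < n →
      ∃ Q : Polynomial ℚ, Q.natDegree ≤ b + 1 ∧
        ∀ a : ℕ, (a : ℤ) % n = r →
          (∑ i ∈ Finset.range (a + 1), if (i : ℤ) % n = c then (i : ℚ) ^ b else 0)
            = Q.eval (a : ℚ) := by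
  intro r hr hrn
  simpa [Int.ModEq, Int.emod_eq_of_lt, *] using
    stmt2_general (X ^ b : ℚ[X]) (hc.trans_lt hcn) c r
end

section
/- Let K be a field of characteristic zero, and let f be a strictly analytic function on a ball B = c + t^β K[[t]] of K((t)), given by f(c+y) = ∑_{i∈ℕ} a_i y^i. Suppose there exists α ∈ ℤ such that ord(f'(x)) = α for every x ∈ B (in particular f'(x) ≠ 0 on B). Then the image f(B) is contained in the ball f(c) + t^{α+β} K[[t]] — equivalently, for all x, y ∈ B with f(x) ≠ f(y), ord(f(x) − f(y)) ≥ α + β — but f(B) is not contained in d + t^{α+β+1} K[[t]] for any d ∈ K((t)). -/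
/-- The `t`-adic order of a Laurent series (with the convention `ord 0 = 0`). -/
noncomputable def ord {K : Type*} [Field K] (x : LaurentSeries K) : ℤ := x.order

/-- The angular component of a Laurent series: the coefficient of `t^(ord x)`
(so `ac 0 = 0`). -/
noncomputable def ac {K : Type*} [Field K] (x : LaurentSeries K) : K := x.coeff x.order

/-- The ball `c + t^γ K[[t]] = {x : x = c ∨ ord (x - c) ≥ γ}` in `K((t))`. -/
def ball {K : Type*} [Field K] (c : LaurentSeries K) (γ : ℤ) : Set (LaurentSeries K) :=
  {x | x = c ∨ γ ≤ ord (x - c)}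

/-!
By the maximum principle for strictly convergent power series over an infinite residue field,
`∑ aᵢ yⁱ` maps `t^β K[[t]]` into `t^γ K[[t]]` if and only if `ord aᵢ + iβ ≥ γ` for every `i`: each
coefficient of the value at `y = z t^β` is a polynomial in `z ∈ K`, and it vanishes identically only
if its own coefficients do. Apply this to `f - f(c)`, whose coefficients are the `aᵢ` with `i ≥ 1`,
and to `f'`, whose coefficients are the `(i + 1) aᵢ₊₁`. In characteristic zero the factors `i + 1`
do not change orders, so `f(B) ⊆ f(c) + t^(γ+β) K[[t]]` if and only if `f'(B) ⊆ t^γ K[[t]]`. The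
theorem is the case `γ = α` together with the failure of the case `γ = α + 1`.
-/

open Filter Topology Polynomial

section Ball

variable {K : Type*} [Field K] {c x y : LaurentSeries K} {γ δ : ℤ}

theorem mem_ball_iff_le_orderTop : x ∈ ball c γ ↔ (γ : WithTop ℤ) ≤ (x - c).orderTop := by
  rcases eq_or_ne x c with rfl | hxc
  · simp [ball]
  · simp [ball, ord, hxc, ← HahnSeries.order_eq_orderTop_of_ne_zero (sub_ne_zero.2 hxc)]

theorem mem_ball_iff_coeff : x ∈ ball c γ ↔ ∀ n < γ, (x - c).coeff n = 0 := by
  simp [mem_ball_iff_le_orderTop, HahnSeries.le_orderTop_iff_forall]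

theorem mem_ball_zero_iff_coeff : x ∈ ball 0 γ ↔ ∀ n < γ, x.coeff n = 0 := by
  rw [mem_ball_iff_coeff, sub_zero]

theorem mem_ball_zero_iff_ord : x ∈ ball 0 γ ↔ x = 0 ∨ γ ≤ ord x := by
  simp [ball]

theorem sub_mem_ball_zero_iff : x - c ∈ ball 0 γ ↔ x ∈ ball c γ := by
  rw [mem_ball_zero_iff_coeff, mem_ball_iff_coeff]

theorem mem_ball_self (c : LaurentSeries K) (γ : ℤ) : c ∈ ball c γ :=
  Or.inl rfl

theorem ball_eq_ball_of_mem (hx : x ∈ ball c γ) : ball x γ = ball c γ := by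
  ext y
  simp only [mem_ball_iff_coeff, HahnSeries.coeff_sub, sub_eq_zero] at hx ⊢
  exact forall₂_congr fun n hn => by rw [hx n hn]

theorem mul_mem_ball_zero (hx : x ∈ ball 0 γ) (hy : y ∈ ball 0 δ) : x * y ∈ ball 0 (γ + δ) := by
  rw [mem_ball_iff_le_orderTop, sub_zero] at hx hy ⊢
  rw [WithTop.coe_add, HahnSeries.orderTop_mul]
  exact add_le_add hx hy

theorem pow_mem_ball_zero (hx : x ∈ ball 0 γ) (i : ℕ) : x ^ i ∈ ball 0 (i * γ) := by
  rw [mem_ball_iff_le_orderTop, sub_zero] at hx ⊢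
  calc ((i * γ : ℤ) : WithTop ℤ) = i • (γ : WithTop ℤ) := by rw [← WithTop.coe_nsmul, nsmul_eq_mul]
    _ ≤ i • x.orderTop := nsmul_le_nsmul_right hx i
    _ ≤ (x ^ i).orderTop := HahnSeries.orderTop_nsmul_le_orderTop_pow

theorem add_single_mem_ball (c : LaurentSeries K) (γ : ℤ) (z : K) :
    c + HahnSeries.single γ z ∈ ball c γ := by
  rw [mem_ball_iff_le_orderTop, add_sub_cancel_left]
  exact HahnSeries.orderTop_single_le

end Ball

section Summation

variable {K ι : Type*} [Field K] {s : ι → LaurentSeries K} {γ : ℤ}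

theorem tendsto_zero_of_eventually_mem_ball {l : Filter ι}
    (hs : ∀ N : ℤ, ∀ᶠ i in l, s i ∈ ball 0 N) : Tendsto s l (𝓝 0) := by
  intro U hU
  obtain ⟨ε, hεU⟩ := Valued.mem_nhds_zero.mp hU
  set r := MonoidWithZeroHom.ValueGroup₀.embedding ε.1
  have hr : WithZero.exp (-(1 - WithZero.log r)) < r := by
    rw [← WithZero.lt_log_iff_exp_lt (by simp [r])]
    simp
  filter_upwards [hs (1 - WithZero.log r)] with i hi
  refine hεU ?_
  rw [Set.mem_ofPred_eq, Valued.v.restrict_lt_iff_lt_embedding]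
  exact ((LaurentSeries.valuation_le_iff_coeff_lt_eq_zero K).2
    (mem_ball_zero_iff_coeff.1 hi)).trans_lt hr

theorem summable_of_eventually_mem_ball (hs : ∀ N : ℤ, ∀ᶠ i in cofinite, s i ∈ ball 0 N) :
    Summable s := by
  have : NonarchimedeanRing (LaurentSeries K) :=
    (Valuation.subgroups_basis
      (Valued.v : Valuation (LaurentSeries K) (WithZero (Multiplicative ℤ)))).nonarchimedean
  exact NonarchimedeanAddGroup.summable_of_tendsto_cofinite_zero
    (tendsto_zero_of_eventually_mem_ball hs)

theorem coeff_tsum_eq_sum (hs : Summable s) {n : ℤ} {F : Finset ι}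
    (hF : ∀ i ∉ F, (s i).coeff n = 0) : (∑' i, s i).coeff n = ∑ i ∈ F, (s i).coeff n := by
  let _ : UniformSpace K := ⊥
  have : DiscreteTopology K := ⟨rfl⟩
  have hcoeff : HasSum (fun i => (s i).coeff n) ((∑' i, s i).coeff n) :=
    hs.hasSum.map (HahnSeries.coeff.addMonoidHom n)
      (LaurentSeries.uniformContinuous_coeff n).continuous
  exact hcoeff.unique (hasSum_sum_of_ne_finset_zero hF)

theorem tsum_mem_ball_zero (hs : Summable s) (h : ∀ i, s i ∈ ball 0 γ) :
    ∑' i, s i ∈ ball 0 γ := by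
  refine mem_ball_zero_iff_coeff.2 fun n hn => ?_
  rw [coeff_tsum_eq_sum (F := ∅) hs fun i _ => mem_ball_zero_iff_coeff.1 (h i) n hn,
    Finset.sum_empty]

end Summation

section AnalyticSum

variable {K : Type*} [Field K] {a : ℕ → LaurentSeries K} {c x : LaurentSeries K} {β γ : ℤ}

/-- The condition `ord (a i) + i β → ∞`, under which `∑ a i yⁱ` is strictly analytic on
`t^β K[[t]]`. -/
def StrictlyConvergent (a : ℕ → LaurentSeries K) (β : ℤ) : Prop :=
  ∀ N : ℤ, ∃ I : ℕ, ∀ i ≥ I, a i = 0 ∨ N ≤ ord (a i) + (i : ℤ) * β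

/-- The function `x ↦ ∑ a i (x - c)ⁱ` with Taylor coefficients `a` at `c`; it is meaningful on the
balls `c + t^β K[[t]]` for which `a` is strictly convergent. -/
noncomputable def analyticSum (a : ℕ → LaurentSeries K) (c x : LaurentSeries K) :
    LaurentSeries K :=
  ∑' i : ℕ, a i * (x - c) ^ i

/-- The Taylor coefficients of the derivative of the strictly analytic function with Taylor
coefficients `a`. -/
noncomputable def derivCoeff (a : ℕ → LaurentSeries K) (i : ℕ) : LaurentSeries K :=
  ((i : LaurentSeries K) + 1) * a (i + 1)

theorem strictlyConvergent_iff :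
    StrictlyConvergent a β ↔ ∀ N : ℤ, ∀ᶠ i : ℕ in atTop, a i ∈ ball 0 (N - i * β) := by
  simp [StrictlyConvergent, mem_ball_zero_iff_ord, eventually_atTop]

theorem coeff_natCast_add_one_mul (x : LaurentSeries K) (i : ℕ) (n : ℤ) :
    (((i : LaurentSeries K) + 1) * x).coeff n = ((i : K) + 1) * x.coeff n := by
  have h : ((i : LaurentSeries K) + 1) * x = (i + 1) • x := by
    rw [nsmul_eq_mul, Nat.cast_add_one]
  rw [h, HahnSeries.coeff_smul, nsmul_eq_mul, Nat.cast_add_one]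

theorem derivCoeff_mem_ball_zero_iff [CharZero K] {i : ℕ} :
    derivCoeff a i ∈ ball 0 γ ↔ a (i + 1) ∈ ball 0 γ := by
  simp [mem_ball_zero_iff_coeff, derivCoeff, coeff_natCast_add_one_mul, Nat.cast_add_one_ne_zero]

theorem coeff_mul_single_pow (x : LaurentSeries K) (β : ℤ) (z : K) (i : ℕ) (n : ℤ) :
    (x * HahnSeries.single β z ^ i).coeff n = x.coeff (n - i * β) * z ^ i := by
  have h := HahnSeries.coeff_mul_single_add (r := z ^ i) (x := x) (a := n - i * β) (b := i • β)
  rwa [← HahnSeries.single_pow, nsmul_eq_mul, sub_add_cancel] at h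

theorem analyticSum_self (a : ℕ → LaurentSeries K) (c : LaurentSeries K) :
    analyticSum a c c = a 0 := by
  rw [analyticSum, tsum_eq_single 0 fun i hi => by simp [hi]]
  simp

namespace StrictlyConvergent

theorem summable (ha : StrictlyConvergent a β) (hx : x ∈ ball c β) :
    Summable fun i => a i * (x - c) ^ i := by
  refine summable_of_eventually_mem_ball fun N => ?_
  rw [Nat.cofinite_eq_atTop]
  filter_upwards [strictlyConvergent_iff.1 ha N] with i hi
  simpa using mul_mem_ball_zero hi (pow_mem_ball_zero (sub_mem_ball_zero_iff.2 hx) i)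

theorem update_zero (ha : StrictlyConvergent a β) (b : LaurentSeries K) :
    StrictlyConvergent (Function.update a 0 b) β := by
  rw [strictlyConvergent_iff] at ha ⊢
  intro N
  filter_upwards [ha N, eventually_ne_atTop 0] with i hi hi0
  rwa [Function.update_of_ne hi0]

protected theorem derivCoeff (ha : StrictlyConvergent a β) :
    StrictlyConvergent (derivCoeff a) β := by
  rw [strictlyConvergent_iff] at ha ⊢
  intro N
  filter_upwards [(tendsto_add_atTop_nat 1).eventually (ha (N + β))] with i hi
  refine mem_ball_zero_iff_coeff.2 fun n hn => ?_
  rw [derivCoeff, coeff_natCast_add_one_mul,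
    mem_ball_zero_iff_coeff.1 hi n (by push_cast; linarith), mul_zero]

theorem analyticSum_update_zero (ha : StrictlyConvergent a β) (hx : x ∈ ball c β) :
    analyticSum (Function.update a 0 0) c x = analyticSum a c x - a 0 := by
  rw [analyticSum, analyticSum, (ha.summable hx).tsum_eq_add_tsum_ite 0, pow_zero, mul_one,
    add_sub_cancel_left]
  refine tsum_congr fun i => ?_
  rcases eq_or_ne i 0 with rfl | hi <;> simp [*]

theorem exists_polynomial_coeff_analyticSum (ha : StrictlyConvergent a β) (c : LaurentSeries K)
    (n : ℤ) : ∃ P : K[X], (∀ i, P.coeff i = (a i).coeff (n - i * β)) ∧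
      ∀ z, (analyticSum a c (c + HahnSeries.single β z)).coeff n = P.eval z := by
  obtain ⟨I, hI⟩ := eventually_atTop.1 (strictlyConvergent_iff.1 ha (n + 1))
  have hzero : ∀ i ≥ I, (a i).coeff (n - i * β) = 0 := fun i hi =>
    mem_ball_zero_iff_coeff.1 (hI i hi) _ (by linarith)
  let P : K[X] := PowerSeries.trunc I (PowerSeries.mk fun i => (a i).coeff (n - i * β))
  have hP : ∀ i, P.coeff i = (a i).coeff (n - i * β) := fun i => by
    rw [PowerSeries.coeff_trunc, PowerSeries.coeff_mk]
    split_ifs with hi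
    · rfl
    · exact (hzero i (not_lt.1 hi)).symm
  refine ⟨P, hP, fun z => ?_⟩
  have hterm : ∀ i, (a i * (c + HahnSeries.single β z - c) ^ i).coeff n = P.coeff i * z ^ i :=
    fun i => by rw [add_sub_cancel_left, coeff_mul_single_pow, hP]
  rw [analyticSum, coeff_tsum_eq_sum (F := P.support) (ha.summable (add_single_mem_ball c β z)),
    eval_eq_sum, sum_def]
  · exact Finset.sum_congr rfl fun i _ => hterm i
  · intro i hi
    rw [hterm, notMem_support_iff.1 hi, zero_mul]

theorem forall_analyticSum_mem_ball_zero_iff [Infinite K] (ha : StrictlyConvergent a β)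
    (c : LaurentSeries K) :
    (∀ x ∈ ball c β, analyticSum a c x ∈ ball 0 γ) ↔ ∀ i : ℕ, a i ∈ ball 0 (γ - i * β) := by
  refine ⟨fun h i => mem_ball_zero_iff_coeff.2 fun n hn => ?_, fun h x hx => ?_⟩
  · obtain ⟨P, hPcoeff, hPeval⟩ := ha.exists_polynomial_coeff_analyticSum c (n + i * β)
    have hP : P = 0 := Polynomial.funext fun z => by
      rw [← hPeval, eval_zero]
      exact mem_ball_zero_iff_coeff.1 (h _ (add_single_mem_ball c β z)) _ (by linarith)
    simpa [hP] using (hPcoeff i).symm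
  · refine tsum_mem_ball_zero (ha.summable hx) fun i => ?_
    simpa using mul_mem_ball_zero (h i) (pow_mem_ball_zero (sub_mem_ball_zero_iff.2 hx) i)

theorem forall_analyticSum_mem_ball_iff [Infinite K] (ha : StrictlyConvergent a β)
    (c : LaurentSeries K) :
    (∀ x ∈ ball c β, analyticSum a c x ∈ ball (a 0) γ) ↔
      ∀ i : ℕ, a (i + 1) ∈ ball 0 (γ - (i + 1) * β) := by
  calc (∀ x ∈ ball c β, analyticSum a c x ∈ ball (a 0) γ)
      ↔ ∀ x ∈ ball c β, analyticSum (Function.update a 0 0) c x ∈ ball 0 γ :=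
        forall₂_congr fun x hx => by
          rw [ha.analyticSum_update_zero hx, sub_mem_ball_zero_iff]
    _ ↔ ∀ i : ℕ, Function.update a 0 0 i ∈ ball 0 (γ - i * β) :=
        (ha.update_zero 0).forall_analyticSum_mem_ball_zero_iff c
    _ ↔ ∀ i : ℕ, a (i + 1) ∈ ball 0 (γ - (i + 1) * β) := by
        rw [← Nat.and_forall_add_one]
        simp [mem_ball_self]

theorem forall_analyticSum_mem_ball_iff_derivCoeff [CharZero K] (ha : StrictlyConvergent a β)
    (c : LaurentSeries K) :
    (∀ x ∈ ball c β, analyticSum a c x ∈ ball (a 0) (γ + β)) ↔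
      ∀ x ∈ ball c β, analyticSum (derivCoeff a) c x ∈ ball 0 γ := by
  rw [ha.forall_analyticSum_mem_ball_iff, ha.derivCoeff.forall_analyticSum_mem_ball_zero_iff]
  refine forall_congr' fun i => ?_
  rw [derivCoeff_mem_ball_zero_iff, show γ + β - (i + 1) * β = γ - i * β by ring]

end StrictlyConvergent

end AnalyticSum

theorem stmt3_general {K : Type*} [Field K] [CharZero K]
    (c : LaurentSeries K) (β : ℤ) (a : ℕ → LaurentSeries K)
    (hconv : ∀ N : ℤ, ∃ I : ℕ, ∀ i ≥ I, a i = 0 ∨ N ≤ ord (a i) + (i : ℤ) * β)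
    (f f' : LaurentSeries K → LaurentSeries K)
    (hf : ∀ x ∈ ball c β, f x = ∑' i : ℕ, a i * (x - c) ^ i)
    (hf' : ∀ x ∈ ball c β,
      f' x = ∑' i : ℕ, ((i : LaurentSeries K) + 1) * a (i + 1) * (x - c) ^ i)
    (α : ℤ) (hα : ∀ x ∈ ball c β, f' x ∈ ball 0 α)
    (hα_attained : ∃ x ∈ ball c β, f' x ∉ ball 0 (α + 1)) :
    (∀ x ∈ ball c β, f x ∈ ball (f c) (α + β)) ∧
    (∀ x ∈ ball c β, ∀ y ∈ ball c β, f x ≠ f y → α + β ≤ ord (f x - f y)) ∧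
    (∀ d : LaurentSeries K, ∃ x ∈ ball c β, f x ∉ ball d (α + β + 1)) := by
  have hfc : f c = a 0 := (hf c (mem_ball_self c β)).trans (analyticSum_self a c)
  have image_iff (γ : ℤ) : (∀ x ∈ ball c β, f x ∈ ball (f c) (γ + β)) ↔
      ∀ x ∈ ball c β, f' x ∈ ball 0 γ := by
    have hf_sum : ∀ x ∈ ball c β, f x = analyticSum a c x := hf
    have hf'_sum : ∀ x ∈ ball c β, f' x = analyticSum (derivCoeff a) c x := hf'
    simpa +contextual only [hfc, hf_sum, hf'_sum] using
      StrictlyConvergent.forall_analyticSum_mem_ball_iff_derivCoeff hconv c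
  have himage := (image_iff α).2 hα
  refine ⟨himage, fun x hx y hy hxy => ?_, fun d => ?_⟩
  · have hxy_mem : f x ∈ ball (f y) (α + β) := ball_eq_ball_of_mem (himage y hy) ▸ himage x hx
    exact hxy_mem.resolve_left hxy
  · by_contra! hd
    obtain ⟨x, hx, hfx⟩ := hα_attained
    refine hfx ((image_iff (α + 1)).1 (fun y hy => ?_) x hx)
    rw [add_right_comm, ball_eq_ball_of_mem (hd c (mem_ball_self c β))]
    exact hd y hy

/-- Let `f` be strictly analytic on the ball `B = c + t^β K[[t]]`, with derivative `f'`,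
and suppose `f' x ≠ 0` and `ord (f' x) = α` for all `x ∈ B`.  Then `f(B)` is contained in
the ball `f(c) + t^(α+β) K[[t]]` — equivalently, `ord (f x - f y) ≥ α + β` whenever
`x, y ∈ B` and `f x ≠ f y` — but `f(B)` is not contained in any ball
`d + t^(α+β+1) K[[t]]`. -/
theorem stmt3 {K : Type*} [Field K] [CharZero K]
    (c : LaurentSeries K) (β : ℤ) (a : ℕ → LaurentSeries K)
    (hconv : ∀ N : ℤ, ∃ I : ℕ, ∀ i ≥ I, a i = 0 ∨ N ≤ ord (a i) + (i : ℤ) * β)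
    (f f' : LaurentSeries K → LaurentSeries K)
    (hf : ∀ x ∈ ball c β, f x = ∑' i : ℕ, a i * (x - c) ^ i)
    (hf' : ∀ x ∈ ball c β,
      f' x = ∑' i : ℕ, ((i : LaurentSeries K) + 1) * a (i + 1) * (x - c) ^ i)
    (α : ℤ) (hα : ∀ x ∈ ball c β, f' x ≠ 0 ∧ ord (f' x) = α) :
    (∀ x ∈ ball c β, f x ∈ ball (f c) (α + β)) ∧
    (∀ x ∈ ball c β, ∀ y ∈ ball c β, f x ≠ f y → α + β ≤ ord (f x - f y)) ∧
    (∀ d : LaurentSeries K, ∃ x ∈ ball c β, f x ∉ ball d (α + β + 1)) := by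
  refine stmt3_general c β a hconv f f' hf hf' α (fun x hx => ?_) ⟨c, mem_ball_self c β, ?_⟩
  · exact mem_ball_zero_iff_ord.2 (.inr (hα x hx).2.ge)
  · simp [mem_ball_zero_iff_ord, hα c (mem_ball_self c β)]
end

section
/- Let K be a field of characteristic zero, and let f be a strictly analytic function on a ball B = c + t^β K[[t]] of K((t)), given by f(c+y) = ∑_{i∈ℕ} a_i y^i. Suppose there exists α ∈ ℤ such that ord(f'(x)) = α for every x ∈ B. Then for every x₀ ∈ B and all y, z ∈ x₀ + t^{β+1} K[[t]] with y ≠ z, one has ord(f(z) − f(y)) = α + ord(z − y). -/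
/-!
The argument works over every complete valued field whose nonzero integers are units, with balls of
radius `v π`; the case of `K((t))` is `π = t ^ β`, where `v x = exp (-ord x)`.

The values of `f'` on the ball control its Gauss norm. Indeed, suppose that some coefficient of
`f' (c + π * u) = ∑ b i * u ^ i` exceeds the bound `A` for those values. Modulo terms smaller than
that coefficient, the series is a polynomial, and it is recovered by Lagrange interpolation from its
values at `u = 0, 1, 2, …`. The differences of these nodes are units, so the interpolation does not
increase valuations, a contradiction. As `i + 1` is a unit, the coefficients `a (i + 1)` of `f`
satisfy the same bound as `b i = (i + 1) * a (i + 1) * π ^ i`.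

If `y` and `z` are at distance at most `ρ * v π` from `x₀`, with `ρ < 1`, then the first-order
remainder of each monomial gains a factor `ρ`. Summing gives
`v (f z - f y - f' x₀ * (z - y)) ≤ ρ * A * v (z - y)`. With `A = v (f' x₀)` the linear term
dominates strictly, and the ultrametric equality gives `v (f z - f y) = v (f' x₀) * v (z - y)`.
-/

open Filter Finset Polynomial Topology Valued

section Ring

variable {R Γ₀ : Type*} [Ring R]

section Monoid

variable [LinearOrderedCommMonoidWithZero Γ₀] (v : Valuation R Γ₀)

theorem valuation_natCast_le_one (n : ℕ) : v n ≤ 1 := by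
  induction n with
  | zero => simp
  | succ n ih => simpa using v.map_add_le ih v.map_one.le

theorem valuation_mul_pow_mono {x y : R} (hxy : v x ≤ v y) (b : R) (n : ℕ) :
    v (b * x ^ n) ≤ v (b * y ^ n) := by
  simp only [map_mul, map_pow]
  exact mul_le_mul' le_rfl (pow_le_pow_left' hxy n)

theorem pairwise_valuation_natCast_sub_eq_one (hres : ∀ n : ℕ, n ≠ 0 → v n = 1) :
    Pairwise fun i j : ℕ ↦ v ((i : R) - j) = 1 := by
  intro i j hij
  wlog hlt : j < i generalizing i j
  · rw [v.map_sub_swap]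
    exact this hij.symm (hij.lt_or_gt.resolve_right hlt)
  · rw [← Nat.cast_sub hlt.le]
    exact hres _ (Nat.sub_ne_zero_of_lt hlt)

end Monoid

section Group

variable [LinearOrderedCommGroupWithZero Γ₀] {v : Valuation R Γ₀}

theorem valuation_eq_of_sub_le_mul {x y : R} {ρ : Γ₀} (hρ : ρ < 1) (hxy : v (x - y) ≤ ρ * v y) :
    v x = v y := by
  rcases eq_or_ne (v y) 0 with hy | hy
  · have hx : v (x - y + y) ≤ 0 := v.map_add_le (by simpa [hy] using hxy) hy.le
    rw [hy, ← le_zero_iff, ← sub_add_cancel x y]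
    exact hx
  · have hlt : v (x - y) < v y := hxy.trans_lt (mul_lt_of_lt_one_left (zero_lt_iff.2 hy) hρ)
    simpa using v.map_add_eq_of_lt_right hlt

end Group

end Ring

section CommRing

variable {R Γ₀ : Type*} [CommRing R] [LinearOrderedCommMonoidWithZero Γ₀] (v : Valuation R Γ₀)

theorem valuation_pow_sub_pow_le {x y : R} {r : Γ₀} (hx : v x ≤ r) (hy : v y ≤ r) (n : ℕ) :
    v (y ^ (n + 1) - x ^ (n + 1)) ≤ v (y - x) * r ^ n := by
  induction n with
  | zero => simp
  | succ n ih =>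
    have hsplit : y ^ (n + 1 + 1) - x ^ (n + 1 + 1) =
        y * (y ^ (n + 1) - x ^ (n + 1)) + (y - x) * x ^ (n + 1) := by ring
    rw [hsplit]
    refine v.map_add_le ?_ ?_
    · calc v (y * (y ^ (n + 1) - x ^ (n + 1)))
          ≤ r * (v (y - x) * r ^ n) := by rw [map_mul]; exact mul_le_mul' hy ih
        _ = v (y - x) * r ^ (n + 1) := by rw [pow_succ, mul_left_comm, mul_comm r]
    · rw [map_mul, map_pow]
      exact mul_le_mul' le_rfl (pow_le_pow_left' hx _)

theorem valuation_pow_sub_pow_sub_deriv_le {x y z : R} {r ρ : Γ₀} (hx : v x ≤ r) (hy : v y ≤ r)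
    (hz : v z ≤ r) (hxy : v (y - x) ≤ ρ * r) (hxz : v (z - x) ≤ ρ * r) (n : ℕ) :
    v (z ^ (n + 1) - y ^ (n + 1) - (n + 1) * x ^ n * (z - y)) ≤ ρ * r ^ n * v (z - y) := by
  induction n with
  | zero => simp
  | succ n ih =>
    have hsplit : z ^ (n + 1 + 1) - y ^ (n + 1 + 1) - ((n + 1 : ℕ) + 1) * x ^ (n + 1) * (z - y) =
        z * (z ^ (n + 1) - y ^ (n + 1) - (n + 1) * x ^ n * (z - y)) +
          (y ^ (n + 1) - x ^ (n + 1) + (n + 1 : ℕ) * (x ^ n * (z - x))) * (z - y) := by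
      push_cast; ring
    rw [hsplit]
    refine v.map_add_le ?_ ?_
    · calc v (z * (z ^ (n + 1) - y ^ (n + 1) - (n + 1) * x ^ n * (z - y)))
          ≤ r * (ρ * r ^ n * v (z - y)) := by rw [map_mul]; exact mul_le_mul' hz ih
        _ = ρ * r ^ (n + 1) * v (z - y) := by
          rw [pow_succ, ← mul_assoc, mul_comm r, mul_assoc ρ]
    · rw [map_mul]
      refine mul_le_mul' (v.map_add_le ?_ ?_) le_rfl
      · calc v (y ^ (n + 1) - x ^ (n + 1))
            ≤ v (y - x) * r ^ n := valuation_pow_sub_pow_le v hx hy n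
          _ ≤ ρ * r * r ^ n := mul_le_mul' hxy le_rfl
          _ = ρ * r ^ (n + 1) := by rw [pow_succ', mul_assoc]
      · calc v ((n + 1 : ℕ) * (x ^ n * (z - x)))
            = v (n + 1 : ℕ) * (v x ^ n * v (z - x)) := by rw [map_mul, map_mul, map_pow]
          _ ≤ 1 * (r ^ n * (ρ * r)) := mul_le_mul' (valuation_natCast_le_one v _)
              (mul_le_mul' (pow_le_pow_left' hx n) hxz)
          _ = ρ * r ^ (n + 1) := by rw [one_mul, mul_left_comm, pow_succ]

end CommRing

section IntegralPolynomials

variable {R Γ₀ : Type*} [Ring R] [LinearOrderedCommGroupWithZero Γ₀] {v : Valuation R Γ₀}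

theorem mem_liftsRing_integer_iff {p : R[X]} :
    p ∈ liftsRing v.integer.subtype ↔ ∀ i, v (p.coeff i) ≤ 1 := by
  simp [← lifts_iff_liftsRing, lifts_iff_coeff_lifts, Valuation.mem_integer_iff]

theorem C_mem_liftsRing_integer {x : R} (hx : v x ≤ 1) : C x ∈ liftsRing v.integer.subtype :=
  (lifts_iff_liftsRing _ _).1 (C_mem_lifts v.integer.subtype ⟨x, hx⟩)

end IntegralPolynomials

section Interpolation

variable {L Γ₀ ι : Type*} [Field L] [LinearOrderedCommGroupWithZero Γ₀]
  {v : Valuation L Γ₀}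

theorem valuation_coeff_lagrangeBasis_le_one [DecidableEq ι] {s : Finset ι} {κ : ι → L} {j : ι}
    (hj : j ∈ s) (hκ : ∀ i ∈ s, v (κ i) ≤ 1)
    (hκ_sub : (s : Set ι).Pairwise fun i j ↦ v (κ i - κ j) = 1) (i : ℕ) :
    v ((Lagrange.basis s κ j).coeff i) ≤ 1 := by
  refine mem_liftsRing_integer_iff.1 (prod_mem fun k hk ↦ mul_mem ?_ (sub_mem ?_ ?_)) i
  · obtain ⟨hkj, hks⟩ := mem_erase.1 hk
    exact C_mem_liftsRing_integer (by rw [map_inv₀, hκ_sub hj hks hkj.symm, inv_one])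
  · exact (lifts_iff_liftsRing _ _).1 (X_mem_lifts _)
  · exact C_mem_liftsRing_integer (hκ k (mem_of_mem_erase hk))

theorem valuation_coeff_lt_of_eval_lt {s : Finset ι} {κ : ι → L} {p : L[X]} {A : Γ₀} (hA : A ≠ 0)
    (hp : p.degree < #s) (hκ : ∀ i ∈ s, v (κ i) ≤ 1)
    (hκ_sub : (s : Set ι).Pairwise fun i j ↦ v (κ i - κ j) = 1)
    (hpA : ∀ i ∈ s, v (p.eval (κ i)) < A) (i : ℕ) : v (p.coeff i) < A := by
  classical
  have hinj : Set.InjOn κ s := by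
    intro j hj k hk hjk
    by_contra hne
    simpa [hjk] using hκ_sub hj hk hne
  rw [Lagrange.eq_interpolate hinj hp, Lagrange.interpolate_apply, finsetSum_coeff]
  refine v.map_sum_lt hA fun j hj ↦ ?_
  rw [coeff_C_mul, map_mul]
  exact mul_lt_of_lt_of_le_one (hpA j hj) (valuation_coeff_lagrangeBasis_le_one hj hκ hκ_sub i)

end Interpolation

section Summation

variable {R Γ₀ ι : Type*} [Ring R] [LinearOrderedCommGroupWithZero Γ₀] [Valued R Γ₀]

theorem exists_valuation_sum_eq_of_hasSum {g : ι → R} {x : R} (hg : HasSum g x) :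
    ∃ s : Finset ι, v (∑ i ∈ s, g i) = v x := by
  by_cases hx : v x = 0
  · exact ⟨∅, by simp [hx]⟩
  · exact (hg.eventually (locally_const hx)).exists

theorem valuation_le_of_hasSum {g : ι → R} {x : R} {A : Γ₀} (hg : HasSum g x)
    (hA : ∀ i, v (g i) ≤ A) : v x ≤ A := by
  obtain ⟨s, hs⟩ := exists_valuation_sum_eq_of_hasSum hg
  exact hs ▸ v.map_sum_le fun i _ ↦ hA i

theorem valuation_lt_of_hasSum {g : ι → R} {x : R} {A : Γ₀} (hg : HasSum g x) (hA₀ : A ≠ 0)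
    (hA : ∀ i, v (g i) < A) : v x < A := by
  obtain ⟨s, hs⟩ := exists_valuation_sum_eq_of_hasSum hg
  exact hs ▸ v.map_sum_lt hA₀ fun i _ ↦ hA i

theorem valuation_sum_range_lt {g : ℕ → R} {x : R} {A : Γ₀} {n : ℕ} (hg : HasSum g x)
    (hx : v x < A) (htail : ∀ i ≥ n, v (g i) < A) : v (∑ i ∈ range n, g i) < A := by
  have htail_sum : v (x - ∑ i ∈ range n, g i) < A :=
    valuation_lt_of_hasSum ((hasSum_nat_add_iff' n).2 hg) (zero_le.trans_lt hx).ne'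
      fun i ↦ htail _ (Nat.le_add_left n i)
  simpa using v.map_sub_lt hx htail_sum

theorem tendsto_zero_of_valuation_le {l : Filter ι} {g h : ι → R} (hg : Tendsto g l (𝓝 0))
    (hh : ∀ i, v (h i) ≤ v (g i)) : Tendsto h l (𝓝 0) := by
  rw [(hasBasis_nhds_zero R Γ₀).tendsto_right_iff] at hg ⊢
  exact fun γ hγ ↦ (hg γ hγ).mono fun i hi ↦ (v.restrict_le_iff.2 (hh i)).trans_lt hi

theorem eventually_valuation_lt {l : Filter ι} {g : ι → R} (hg : Tendsto g l (𝓝 0)) {x : R}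
    (hx : v x ≠ 0) : ∀ᶠ i in l, v (g i) < v x := by
  have hx' : (v : Valuation R Γ₀).restrict x ≠ 0 := by simpa using hx
  filter_upwards [(hasBasis_nhds_zero R Γ₀).tendsto_right_iff.1 hg (Units.mk0 _ hx') trivial]
    with i hi using v.restrict_lt_iff.1 hi

theorem nonarchimedeanRing_of_valued : NonarchimedeanRing R where
  is_nonarchimedean U hU := by
    obtain ⟨γ, -, hγ⟩ := (hasBasis_nhds_zero R Γ₀).mem_iff.1 hU
    exact ⟨⟨(v : Valuation R Γ₀).restrict.ltAddSubgroup γ, Valued.isOpen_ball R _⟩, hγ⟩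

theorem summable_mul_pow [CompleteSpace R] {a : ℕ → R} {π u : R}
    (ha : Tendsto (fun i ↦ a i * π ^ i) atTop (𝓝 0)) (hu : v u ≤ v π) :
    Summable fun i ↦ a i * u ^ i := by
  have := nonarchimedeanRing_of_valued (R := R)
  refine NonarchimedeanAddGroup.summable_of_tendsto_cofinite_zero ?_
  rw [Nat.cofinite_eq_atTop]
  exact tendsto_zero_of_valuation_le ha fun i ↦ valuation_mul_pow_mono v hu (a i) i

end Summation

section PowerSeries

variable {L Γ₀ : Type*} [Field L] [LinearOrderedCommGroupWithZero Γ₀] [Valued L Γ₀]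
  {a : ℕ → L} {π : L}

theorem tendsto_deriv_mul_pow (hπ : π ≠ 0) (ha : Tendsto (fun i ↦ a i * π ^ i) atTop (𝓝 0)) :
    Tendsto (fun i : ℕ ↦ ((i : L) + 1) * a (i + 1) * π ^ i) atTop (𝓝 0) := by
  have hshift : Tendsto (fun i ↦ a (i + 1) * π ^ (i + 1) * π⁻¹) atTop (𝓝 0) := by
    simpa using ((tendsto_add_atTop_iff_nat 1).2 ha).mul_const π⁻¹
  refine tendsto_zero_of_valuation_le hshift fun i ↦ ?_
  calc v (((i : L) + 1) * a (i + 1) * π ^ i)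
      = v ((i + 1 : ℕ) : L) * v (a (i + 1) * π ^ i) := by rw [← map_mul]; push_cast; ring_nf
    _ ≤ v (a (i + 1) * π ^ i) := mul_le_of_le_one_left' (valuation_natCast_le_one _ _)
    _ = v (a (i + 1) * π ^ (i + 1) * π⁻¹) := by rw [pow_succ]; field_simp

variable [CompleteSpace L]

theorem valuation_mul_pow_le_of_forall_tsum_le (ha : Tendsto (fun i ↦ a i * π ^ i) atTop (𝓝 0))
    {κ : ℕ → L} (hκ : ∀ i, v (κ i) ≤ 1) (hκ_sub : Pairwise fun i j ↦ v (κ i - κ j) = 1) {A : Γ₀}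
    (hA : ∀ u : L, v u ≤ v π → v (∑' i, a i * u ^ i) ≤ A) (i : ℕ) : v (a i * π ^ i) ≤ A := by
  by_contra! hi
  have hi₀ : v (a i * π ^ i) ≠ 0 := (zero_le.trans_lt hi).ne'
  obtain ⟨I, hI⟩ := eventually_atTop.1 (eventually_valuation_lt ha hi₀)
  let p : L[X] := ∑ j ∈ range I, monomial j (a j * π ^ j)
  have hp_coeff (k : ℕ) : p.coeff k = if k < I then a k * π ^ k else 0 := by
    simp [p, finsetSum_coeff, coeff_monomial]
  have hp : p.degree < #(range I) := by
    refine (degree_lt_iff_coeff_zero _ _).2 fun k hk ↦ ?_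
    simp_all
  have hiI : i < I := by
    by_contra! h
    exact (hI i h).false
  have heval (j : ℕ) : v (p.eval (κ j)) < v (a i * π ^ i) := by
    have hu : v (κ j * π) ≤ v π := by
      rw [map_mul]; exact mul_le_of_le_one_left' (hκ j)
    have hp_eval : p.eval (κ j) = ∑ k ∈ range I, a k * (κ j * π) ^ k := by
      simp [p, eval_finsetSum, mul_pow, mul_assoc, mul_comm]
    rw [hp_eval]
    exact valuation_sum_range_lt (summable_mul_pow ha hu).hasSum ((hA _ hu).trans_lt hi)
      fun k hk ↦ (valuation_mul_pow_mono v hu _ _).trans_lt (hI k hk)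
  exact (if_pos hiI ▸ hp_coeff i ▸ valuation_coeff_lt_of_eval_lt hi₀ hp (fun j _ ↦ hκ j)
    (fun j _ k _ hjk ↦ hκ_sub hjk) (fun j _ ↦ heval j) i).false

theorem valuation_mul_pow_le_of_forall_deriv_le (hres : ∀ n : ℕ, n ≠ 0 → v (n : L) = 1)
    (hπ : π ≠ 0) (ha : Tendsto (fun i ↦ a i * π ^ i) atTop (𝓝 0)) {A : Γ₀}
    (hA : ∀ u : L, v u ≤ v π → v (∑' i : ℕ, ((i : L) + 1) * a (i + 1) * u ^ i) ≤ A) (i : ℕ) :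
    v (a (i + 1) * π ^ i) ≤ A := by
  have hderiv := valuation_mul_pow_le_of_forall_tsum_le (tendsto_deriv_mul_pow hπ ha)
    (valuation_natCast_le_one v) (pairwise_valuation_natCast_sub_eq_one v hres) hA i
  have hunit : v ((i : L) + 1) = 1 := mod_cast hres (i + 1) i.succ_ne_zero
  rwa [mul_assoc, map_mul, hunit, one_mul] at hderiv

theorem valuation_tsum_sub_tsum_sub_deriv_le (hπ : π ≠ 0)
    (ha : Tendsto (fun i ↦ a i * π ^ i) atTop (𝓝 0)) {x y z : L} {A ρ : Γ₀}
    (hx : v x ≤ v π) (hy : v y ≤ v π) (hz : v z ≤ v π)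
    (hxy : v (y - x) ≤ ρ * v π) (hxz : v (z - x) ≤ ρ * v π)
    (hA : ∀ i, v (a (i + 1) * π ^ i) ≤ A) :
    v (∑' i, a i * z ^ i - ∑' i, a i * y ^ i -
      (∑' i : ℕ, ((i : L) + 1) * a (i + 1) * x ^ i) * (z - y)) ≤ ρ * A * v (z - y) := by
  have hsz := summable_mul_pow ha hz
  have hsy := summable_mul_pow ha hy
  have hsx := summable_mul_pow (tendsto_deriv_mul_pow hπ ha) hx
  rw [hsz.tsum_eq_zero_add, hsy.tsum_eq_zero_add]
  simp only [pow_zero, add_sub_add_left_eq_sub]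
  refine valuation_le_of_hasSum ((((summable_nat_add_iff 1).2 hsz).hasSum.sub
    ((summable_nat_add_iff 1).2 hsy).hasSum).sub (hsx.hasSum.mul_right (z - y))) fun i ↦ ?_
  calc v (a (i + 1) * z ^ (i + 1) - a (i + 1) * y ^ (i + 1)
        - ((i : L) + 1) * a (i + 1) * x ^ i * (z - y))
      = v (a (i + 1)) * v (z ^ (i + 1) - y ^ (i + 1) - (i + 1) * x ^ i * (z - y)) := by
        rw [← map_mul]; ring_nf
    _ ≤ v (a (i + 1)) * (ρ * v π ^ i * v (z - y)) :=
        mul_le_mul' le_rfl (valuation_pow_sub_pow_sub_deriv_le v hx hy hz hxy hxz i)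
    _ = ρ * v (a (i + 1) * π ^ i) * v (z - y) := by
        simp only [map_mul, map_pow, mul_assoc, mul_left_comm]
    _ ≤ ρ * A * v (z - y) := mul_le_mul' (mul_le_mul' le_rfl (hA i)) le_rfl

end PowerSeries

section LaurentSeries

variable {K : Type*} [Field K]

theorem valuation_le_exp_neg_iff {x : LaurentSeries K} {n : ℤ} :
    v x ≤ WithZero.exp (-n) ↔ x = 0 ∨ n ≤ ord x := by
  rw [LaurentSeries.valuation_le_iff_coeff_lt_eq_zero]
  by_cases hx : x = 0
  · simp [hx]
  · simp only [hx, false_or]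
    exact (HahnSeries.le_order_iff_forall hx).symm

theorem valuation_eq_exp_neg_ord {x : LaurentSeries K} (hx : x ≠ 0) :
    v x = WithZero.exp (-ord x) := by
  refine le_antisymm (valuation_le_exp_neg_iff.2 (.inr le_rfl)) ?_
  have hv : WithZero.exp (WithZero.log (v x)) = v x := WithZero.exp_log (v.ne_zero_iff.2 hx)
  have hle : -WithZero.log (v x) ≤ ord x :=
    (valuation_le_exp_neg_iff.1 (by rw [neg_neg, hv])).resolve_left hx
  rw [← hv, WithZero.exp_le_exp]
  exact neg_le.1 hle

theorem ord_eq_of_valuation_eq {x : LaurentSeries K} {n : ℤ} (hx : v x = WithZero.exp (-n)) :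
    ord x = n := by
  have hx₀ : x ≠ 0 := (v.ne_zero_iff).1 (hx ▸ WithZero.exp_ne_zero)
  rwa [valuation_eq_exp_neg_ord hx₀, WithZero.exp_inj, neg_inj] at hx

theorem mem_ball_iff_valuation_le {c x : LaurentSeries K} {γ : ℤ} :
    x ∈ ball c γ ↔ v (x - c) ≤ v (HahnSeries.single γ 1 : LaurentSeries K) := by
  rw [LaurentSeries.valuation_single_zpow, valuation_le_exp_neg_iff, sub_eq_zero]
  rfl

theorem mem_ball_add_one_iff_valuation_lt {c x : LaurentSeries K} {γ : ℤ} :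
    x ∈ ball c (γ + 1) ↔ v (x - c) < v (HahnSeries.single γ 1 : LaurentSeries K) := by
  have hγ : WithZero.exp (-γ) = WithZero.exp (-(γ + 1)) * WithZero.exp 1 := by
    rw [← WithZero.exp_add, neg_add_rev, neg_add_cancel_comm]
  rw [mem_ball_iff_valuation_le, LaurentSeries.valuation_single_zpow,
    LaurentSeries.valuation_single_zpow, hγ, WithZero.lt_mul_exp_iff_le WithZero.exp_ne_zero]

theorem laurentSeries_valuation_natCast_eq_one [CharZero K] (n : ℕ) (hn : n ≠ 0) :
    v (n : LaurentSeries K) = 1 := by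
  have hn' : (n : LaurentSeries K) ≠ 0 := by
    rw [← map_natCast (HahnSeries.C (Γ := ℤ) (R := K))]
    exact HahnSeries.C_ne_zero (Nat.cast_ne_zero.2 hn)
  rw [valuation_eq_exp_neg_ord hn', ord, ← map_natCast (HahnSeries.C (Γ := ℤ) (R := K)),
    HahnSeries.order_C, neg_zero, WithZero.exp_zero]

theorem tendsto_zero_of_ord {g : ℕ → LaurentSeries K}
    (hg : ∀ N : ℤ, ∃ I : ℕ, ∀ i ≥ I, g i = 0 ∨ N ≤ ord (g i)) : Tendsto g atTop (𝓝 0) := by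
  refine (hasBasis_nhds_zero (LaurentSeries K) _).tendsto_right_iff.2 fun γ _ ↦ ?_
  let m := WithZero.log (MonoidWithZeroHom.ValueGroup₀.embedding γ.1)
  obtain ⟨I, hI⟩ := hg (1 - m)
  filter_upwards [eventually_ge_atTop I] with i hi
  refine (Valuation.restrict_lt_iff_lt_embedding _).2 ?_
  calc v (g i) ≤ WithZero.exp (-(1 - m)) := valuation_le_exp_neg_iff.2 (hI i hi)
    _ < MonoidWithZeroHom.ValueGroup₀.embedding γ.1 :=
      (WithZero.lt_log_iff_exp_lt (by simp)).1 (by simp [m])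

theorem tendsto_mul_single_pow {a : ℕ → LaurentSeries K} {β : ℤ}
    (ha : ∀ N : ℤ, ∃ I : ℕ, ∀ i ≥ I, a i = 0 ∨ N ≤ ord (a i) + (i : ℤ) * β) :
    Tendsto (fun i ↦ a i * (HahnSeries.single β 1 : LaurentSeries K) ^ i) atTop (𝓝 0) := by
  refine tendsto_zero_of_ord fun N ↦ (ha N).imp fun I hI i hi ↦ ?_
  rcases eq_or_ne (a i) 0 with h₀ | h₀
  · simp [h₀]
  · have hord : ord (a i * (HahnSeries.single β 1 : LaurentSeries K) ^ i) = ord (a i) + i * β := by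
      simp [ord, HahnSeries.order_mul h₀, HahnSeries.single_pow]
    exact .inr (hord ▸ (hI i hi).resolve_left h₀)

end LaurentSeries

theorem stmt5_general {L Γ₀ : Type*} [Field L] [LinearOrderedCommGroupWithZero Γ₀] [Valued L Γ₀]
    [CompleteSpace L] (hres : ∀ n : ℕ, n ≠ 0 → v (n : L) = 1) {c π : L} {a : ℕ → L}
    (hconv : Tendsto (fun i ↦ a i * π ^ i) atTop (𝓝 0)) {f f' : L → L}
    (hf : ∀ x, v (x - c) ≤ v π → f x = ∑' i : ℕ, a i * (x - c) ^ i)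
    (hf' : ∀ x, v (x - c) ≤ v π → f' x = ∑' i : ℕ, ((i : L) + 1) * a (i + 1) * (x - c) ^ i)
    {x₀ : L} (hx₀ : v (x₀ - c) ≤ v π) (hmax : ∀ x, v (x - c) ≤ v π → v (f' x) ≤ v (f' x₀))
    {y z : L} (hy : v (y - x₀) < v π) (hz : v (z - x₀) < v π) :
    v (f z - f y) = v (f' x₀) * v (z - y) := by
  have hπ : v π ≠ 0 := (zero_le.trans_lt hy).ne'
  have hcoeff := valuation_mul_pow_le_of_forall_deriv_le hres (v.ne_zero_iff.1 hπ) hconv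
    (A := v (f' x₀)) fun u hu ↦ by
      have hu' : v (c + u - c) ≤ v π := by rwa [add_sub_cancel_left]
      simpa [hf' _ hu'] using hmax _ hu'
  have hball {x : L} (hx : v (x - x₀) < v π) : v (x - c) ≤ v π := by
    simpa using v.map_add_le hx.le hx₀
  set ρ := max (v (y - x₀)) (v (z - x₀)) / v π with hρ
  have hρ_lt : ρ < 1 := (div_lt_one₀ (zero_lt_iff.2 hπ)).2 (max_lt hy hz)
  have hrem : v (f z - f y - f' x₀ * (z - y)) ≤ ρ * v (f' x₀) * v (z - y) := by
    rw [hf z (hball hz), hf y (hball hy)]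
    simpa [hf' x₀ hx₀] using valuation_tsum_sub_tsum_sub_deriv_le (ρ := ρ) (v.ne_zero_iff.1 hπ)
      hconv hx₀ (hball hy) (hball hz) (by simp [hρ, hπ]) (by simp [hρ, hπ]) hcoeff
  rw [← map_mul]
  exact valuation_eq_of_sub_le_mul hρ_lt (by rwa [map_mul, ← mul_assoc])

/-- Let `f` be strictly analytic on the ball `B = c + t^β K[[t]]`, with derivative `f'`,
and suppose `f' x ≠ 0` and `ord (f' x) = α` for all `x ∈ B`.  Then for every `x₀ ∈ B` and
all `y, z ∈ x₀ + t^(β+1) K[[t]]` with `y ≠ z`, one has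
`ord (f z - f y) = α + ord (z - y)`. -/
theorem stmt5 {K : Type*} [Field K] [CharZero K]
    (c : LaurentSeries K) (β : ℤ) (a : ℕ → LaurentSeries K)
    (hconv : ∀ N : ℤ, ∃ I : ℕ, ∀ i ≥ I, a i = 0 ∨ N ≤ ord (a i) + (i : ℤ) * β)
    (f f' : LaurentSeries K → LaurentSeries K)
    (hf : ∀ x ∈ ball c β, f x = ∑' i : ℕ, a i * (x - c) ^ i)
    (hf' : ∀ x ∈ ball c β,
      f' x = ∑' i : ℕ, ((i : LaurentSeries K) + 1) * a (i + 1) * (x - c) ^ i)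
    (α : ℤ) (hα : ∀ x ∈ ball c β, f' x ≠ 0 ∧ ord (f' x) = α) :
    ∀ x₀ ∈ ball c β, ∀ y ∈ ball x₀ (β + 1), ∀ z ∈ ball x₀ (β + 1),
      y ≠ z → ord (f z - f y) = α + ord (z - y) := by
  intro x₀ hx₀ y hy z hz hyz
  have hv {x} (hx : x ∈ ball c β) : v (f' x) = WithZero.exp (-α) := by
    rw [valuation_eq_exp_neg_ord (hα x hx).1, (hα x hx).2]
  have hjac : v (f z - f y) = v (f' x₀) * v (z - y) :=
    stmt5_general laurentSeries_valuation_natCast_eq_one (tendsto_mul_single_pow hconv)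
      (fun x hx ↦ hf x (mem_ball_iff_valuation_le.2 hx))
      (fun x hx ↦ hf' x (mem_ball_iff_valuation_le.2 hx)) (mem_ball_iff_valuation_le.1 hx₀)
      (fun x hx ↦ ((hv (mem_ball_iff_valuation_le.2 hx)).trans (hv hx₀).symm).le)
      (mem_ball_add_one_iff_valuation_lt.1 hy) (mem_ball_add_one_iff_valuation_lt.1 hz)
  apply ord_eq_of_valuation_eq
  rw [hjac, hv hx₀, valuation_eq_exp_neg_ord (sub_ne_zero.2 hyz.symm), neg_add, WithZero.exp_add]
end

section
/- Let K be a field, c ∈ K((t)), α ∈ ℤ, and ξ a nonzero element of K. Let Z = {x ∈ K((t)) : ord(x − c) = α and ac(x − c) = ξ} and let X = t·K[[t]] = {x ∈ K((t)) : x = 0 or ord(x) ≥ 1}. If Z ⊆ X, then α ≥ 0 and (c = 0 or ord(c) ≥ 0). If moreover ord(c) = 0, then α = 0 and Z = X. -/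
/-!
The cell `Z` is a coset of the subgroup `{x | α < orderTop x}`, and `X` is the subgroup
`{x | 0 < orderTop x}`. A coset lies in a subgroup exactly when a representative and the translated
subgroup do; here the representative is `ξ t ^ α + c`, and the inclusion of subgroups means `0 ≤ α`.
Then `c`, the difference of an element of `X` and `ξ t ^ α`, has nonnegative order. If `0 < α`, then
`ξ t ^ α ∈ X` and hence `c ∈ X`; so `ord c = 0` with `c ≠ 0` forces `α = 0`, and `Z` is a coset of
`X` that meets `X`.
-/

section Coset

open scoped Pointwise

variable {G : Type*} [AddGroup G]

theorem rightAddCoset_subset_iff {H N : AddSubgroup G} {g : G} :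
    AddOpposite.op g +ᵥ (H : Set G) ⊆ N ↔ g ∈ N ∧ H ≤ N := by
  refine ⟨fun h => ?_, ?_⟩
  · have hg : g ∈ N := h (mem_own_rightAddCoset H.toAddSubmonoid g)
    exact ⟨hg, fun x hx => (N.add_mem_cancel_right hg).1 (h (mem_rightAddCoset g hx))⟩
  · rintro ⟨hg, hHN⟩ _ ⟨x, hx, rfl⟩
    exact N.add_mem (hHN hx) hg

end Coset

section HahnSeries

open HahnSeries
open scoped Pointwise

variable {Γ R : Type*} [LinearOrder Γ] [AddGroup R] {α γ : Γ} {ξ : R}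

variable (R) in
/-- The open ball of valuative radius `γ` about `0`, as a subgroup of the Hahn series. The radius is
an exponent, so balls shrink as `γ` grows; for Laurent series, `openBall K 0` is `t·K[[t]]`. -/
def openBall (γ : Γ) : AddSubgroup (HahnSeries Γ R) where
  carrier := {x | γ < x.orderTop}
  zero_mem' := by simp
  add_mem' {x y} (hx : γ < x.orderTop) (hy : γ < y.orderTop) :=
    Set.mem_ofPred.2 <| (lt_min hx hy).trans_le min_orderTop_le_orderTop_add
  neg_mem' hx := by simpa using hx

theorem mem_openBall {x : HahnSeries Γ R} : x ∈ openBall R γ ↔ (γ : WithTop Γ) < x.orderTop :=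
  Iff.rfl

theorem single_mem_openBall_iff (hξ : ξ ≠ 0) : single α ξ ∈ openBall R γ ↔ γ < α := by
  rw [mem_openBall, orderTop_single hξ, WithTop.coe_lt_coe]

theorem openBall_le_openBall_iff [Nontrivial R] : openBall R α ≤ openBall R γ ↔ γ ≤ α := by
  refine ⟨fun h => ?_, fun h x hx => (WithTop.coe_le_coe.2 h).trans_lt hx⟩
  obtain ⟨r, hr⟩ := exists_ne (0 : R)
  by_contra! hαγ
  exact lt_irrefl γ <| (single_mem_openBall_iff hr).1 (h ((single_mem_openBall_iff hr).2 hαγ))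

theorem sub_single_mem_openBall_iff (hξ : ξ ≠ 0) {x : HahnSeries Γ R} :
    x - single α ξ ∈ openBall R α ↔ x.orderTop = α ∧ x.leadingCoeff = ξ := by
  constructor
  · intro h
    have hlt : (single α ξ).orderTop < (x - single α ξ).orderTop := by
      rwa [orderTop_single hξ]
    rw [← sub_add_cancel x (single α ξ), orderTop_add_eq_right hlt, leadingCoeff_add_eq_right hlt]
    exact ⟨orderTop_single hξ, leadingCoeff_of_single⟩
  · rintro ⟨hα, hlead⟩
    exact le_orderTop_of_leadingCoeff_eq hα (orderTop_single hξ)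
      (hlead.trans leadingCoeff_of_single.symm)

theorem setOf_orderTop_leadingCoeff_sub_eq_rightAddCoset (hξ : ξ ≠ 0) (c : HahnSeries Γ R) :
    {x : HahnSeries Γ R | (x - c).orderTop = α ∧ (x - c).leadingCoeff = ξ} =
      AddOpposite.op (single α ξ + c) +ᵥ (openBall R α : Set (HahnSeries Γ R)) := by
  ext x
  rw [Set.mem_ofPred_eq, ← sub_single_mem_openBall_iff hξ, mem_rightAddCoset_iff,
    ← sub_eq_add_neg, sub_add_eq_sub_sub_swap, SetLike.mem_coe]

theorem stmt10_general (c : HahnSeries Γ R) (α γ : Γ) (hξ : ξ ≠ 0)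
    (h : {x : HahnSeries Γ R | (x - c).orderTop = α ∧ (x - c).leadingCoeff = ξ} ⊆
      {x : HahnSeries Γ R | γ < x.orderTop}) :
    (γ ≤ α ∧ γ ≤ c.orderTop) ∧
      (c.orderTop = γ → α = γ ∧
        {x : HahnSeries Γ R | (x - c).orderTop = α ∧ (x - c).leadingCoeff = ξ} =
          {x : HahnSeries Γ R | γ < x.orderTop}) := by
  have : Nontrivial R := nontrivial_of_ne ξ 0 hξ
  rw [setOf_orderTop_leadingCoeff_sub_eq_rightAddCoset hξ] at h ⊢
  obtain ⟨hmem, hle⟩ : single α ξ + c ∈ openBall R γ ∧ openBall R α ≤ openBall R γ :=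
    rightAddCoset_subset_iff.1 h
  have hγα : γ ≤ α := openBall_le_openBall_iff.1 hle
  refine ⟨⟨hγα, ?_⟩, fun hc => ?_⟩
  · rw [← neg_add_cancel_left (single α ξ) c]
    refine (le_min ?_ (mem_openBall.1 hmem).le).trans min_orderTop_le_orderTop_add
    rwa [orderTop_neg, orderTop_single hξ, WithTop.coe_le_coe]
  · obtain rfl : γ = α := hγα.eq_of_not_lt fun hlt => by
      have hc_mem : c ∈ openBall R γ :=
        (add_mem_cancel_left ((single_mem_openBall_iff hξ).2 hlt)).1 hmem
      exact (mem_openBall.1 hc_mem).ne' hc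
    exact ⟨rfl, rightAddCoset_mem_rightAddCoset _ hmem⟩

end HahnSeries

section LaurentSeries

variable {K : Type*} [Field K] {x : LaurentSeries K} {n : ℤ}

theorem coe_ord_of_ne_zero (hx : x ≠ 0) : (ord x : WithTop ℤ) = x.orderTop :=
  HahnSeries.order_eq_orderTop_of_ne_zero hx

theorem ac_eq_leadingCoeff (x : LaurentSeries K) : ac x = x.leadingCoeff :=
  HahnSeries.leadingCoeff_eq.symm

theorem eq_zero_or_le_ord_iff : x = 0 ∨ n ≤ ord x ↔ (n : WithTop ℤ) ≤ x.orderTop := by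
  rcases eq_or_ne x 0 with rfl | hx
  · simp
  · simp [hx, ← coe_ord_of_ne_zero hx]

theorem eq_zero_or_lt_ord_iff : x = 0 ∨ n < ord x ↔ (n : WithTop ℤ) < x.orderTop := by
  rcases eq_or_ne x 0 with rfl | hx
  · simp
  · simp [hx, ← coe_ord_of_ne_zero hx]

theorem ord_eq_and_ac_eq_iff {ξ : K} (hξ : ξ ≠ 0) :
    ord x = n ∧ ac x = ξ ↔ x.orderTop = n ∧ x.leadingCoeff = ξ := by
  rw [ac_eq_leadingCoeff]
  refine and_congr_left fun hlead => ?_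
  have hx : x ≠ 0 := HahnSeries.leadingCoeff_ne_zero.1 (hlead ▸ hξ)
  rw [← coe_ord_of_ne_zero hx, WithTop.coe_inj]

end LaurentSeries

/-- Let `Z = {x : ord (x - c) = α, ac (x - c) = ξ}` (with `ξ ≠ 0`) and
`X = t·K[[t]] = {x : x = 0 ∨ ord x ≥ 1}`.  If `Z ⊆ X` then `α ≥ 0` and
(`c = 0` or `ord c ≥ 0`); if moreover `c ≠ 0` and `ord c = 0`, then `α = 0` and
`Z = X`. -/
theorem stmt10 {K : Type*} [Field K] (c : LaurentSeries K) (α : ℤ) (ξ : K) (hξ : ξ ≠ 0) :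
    ({x : LaurentSeries K | ord (x - c) = α ∧ ac (x - c) = ξ}
        ⊆ {x : LaurentSeries K | x = 0 ∨ 1 ≤ ord x} →
      0 ≤ α ∧ (c = 0 ∨ 0 ≤ ord c)) ∧
    ({x : LaurentSeries K | ord (x - c) = α ∧ ac (x - c) = ξ}
        ⊆ {x : LaurentSeries K | x = 0 ∨ 1 ≤ ord x} →
      c ≠ 0 → ord c = 0 →
      α = 0 ∧
        {x : LaurentSeries K | ord (x - c) = α ∧ ac (x - c) = ξ}
          = {x : LaurentSeries K | x = 0 ∨ 1 ≤ ord x}) := by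
  simp only [ord_eq_and_ac_eq_iff hξ, Order.one_le_iff_pos, eq_zero_or_lt_ord_iff,
    eq_zero_or_le_ord_iff]
  exact ⟨fun h => (stmt10_general c α 0 hξ h).1, fun h hc hord =>
    (stmt10_general c α 0 hξ h).2 (hord ▸ (coe_ord_of_ne_zero hc).symm)⟩
end

section
/- Let K be a field, α ∈ ℤ, and (a_i)_{i∈ℕ} a sequence in K((t)). The following are equivalent: (i) for every y ∈ t^α K[[t]], the family (a_i y^i)_{i∈ℕ} is summable in K((t)); (ii) ord(a_i) + iα tends to +∞ as i → ∞, in the sense that for every N there exists I such that for all i ≥ I, either a_i = 0 or ord(a_i) + iα ≥ N. -/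
/-!
In a complete nonarchimedean ring a family is summable exactly when it tends to zero. If
`v y ≤ v x`, then `v (a i * y ^ i) ≤ v (a i * x ^ i)`, so summability of `∑ a i * y ^ i` on the
whole disc `v y ≤ v x` amounts to `a i * x ^ i → 0` at the single point `x`. In `K((t))` the disc
`t^α K[[t]]` is `v y ≤ v (t^α)`, and `a i * t^(α i)` has order `ord (a i) + i α`.
-/

section

open Filter Topology WithZero

section Valued

variable {R Γ₀ : Type*} [LinearOrderedCommGroupWithZero Γ₀]

theorem nonarchimedeanAddGroup_of_valued [Ring R] [Valued R Γ₀] : NonarchimedeanAddGroup R where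
  is_nonarchimedean U hU := by
    obtain ⟨γ, hγ⟩ := Valued.mem_nhds_zero.mp hU
    exact ⟨⟨Valued.v.restrict.ltAddSubgroup γ, Valued.isOpen_ball _ _⟩, hγ⟩

theorem summable_iff_tendsto_cofinite_zero_of_valued [Ring R] [Valued R Γ₀] [CompleteSpace R]
    {ι : Type*} (f : ι → R) : Summable f ↔ Tendsto f cofinite (𝓝 0) :=
  haveI : NonarchimedeanAddGroup R := nonarchimedeanAddGroup_of_valued
  NonarchimedeanAddGroup.summable_iff_tendsto_cofinite_zero f

theorem tendsto_nhds_zero_of_valuation_le [Ring R] [Valued R Γ₀] {ι : Type*} {l : Filter ι}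
    {f g : ι → R} (hf : Tendsto f l (𝓝 0)) (hgf : ∀ i, Valued.v (g i) ≤ Valued.v (f i)) :
    Tendsto g l (𝓝 0) := by
  have hbasis := Valued.hasBasis_nhds_zero R Γ₀
  refine hbasis.tendsto_right_iff.mpr fun γ hγ => ?_
  filter_upwards [hbasis.tendsto_right_iff.mp hf γ hγ] with i hi
  exact (Valued.v.restrict_le_iff.mpr (hgf i)).trans_lt hi

theorem hasBasis_nhds_zero_valuation_lt [DivisionRing R] [Valued R Γ₀] :
    (𝓝 (0 : R)).HasBasis (fun b : R => b ≠ 0) fun b => {x | Valued.v x < Valued.v b} := by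
  refine (Valued.hasBasis_nhds_zero R Γ₀).to_hasBasis (fun γ _ => ?_) fun b hb => ?_
  · obtain ⟨b, hb : Valued.v.restrict b = γ⟩ :=
      MonoidWithZeroHom.ValueGroup₀.restrict₀_surjective _ γ.1
    have hb₀ : b ≠ 0 := by
      rintro rfl
      exact γ.ne_zero (by rw [← hb, map_zero])
    exact ⟨b, hb₀, fun x hx => hb ▸ Valued.v.restrict_lt_iff.mpr hx⟩
  · have hb₀ : Valued.v.restrict b ≠ 0 := by simpa using hb
    exact ⟨Units.mk0 _ hb₀, trivial, fun x hx => Valued.v.restrict_lt_iff.mp hx⟩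

theorem stmt11_general [Ring R] [Valued R Γ₀] [CompleteSpace R] (x : R) (a : ℕ → R) :
    (∀ y : R, Valued.v y ≤ Valued.v x → Summable fun i : ℕ => a i * y ^ i) ↔
      Tendsto (fun i : ℕ => a i * x ^ i) atTop (𝓝 0) := by
  simp only [summable_iff_tendsto_cofinite_zero_of_valued, Nat.cofinite_eq_atTop]
  refine ⟨fun h => h x le_rfl, fun h y hy => tendsto_nhds_zero_of_valuation_le h fun i => ?_⟩
  simp only [map_mul, map_pow]
  gcongr

end Valued

section LaurentSeries

variable {K : Type*} [Field K]

theorem valuation_le_exp_neg_iff_le_ord (x : LaurentSeries K) (n : ℤ) :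
    Valued.v x ≤ exp (-n) ↔ x = 0 ∨ n ≤ ord x := by
  rw [LaurentSeries.valuation_le_iff_coeff_lt_eq_zero]
  obtain rfl | hx := eq_or_ne x 0
  · simp
  · simp only [hx, false_or]
    exact (HahnSeries.le_order_iff_forall hx).symm

theorem hasBasis_nhds_zero_le_ord :
    (𝓝 (0 : LaurentSeries K)).HasBasis (fun _ : ℤ => True) fun n => {x | x = 0 ∨ n ≤ ord x} := by
  simp only [← valuation_le_exp_neg_iff_le_ord]
  refine hasBasis_nhds_zero_valuation_lt.to_hasBasis (fun b hb => ?_) fun n _ => ?_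
  · have hvb : Valued.v b ≠ 0 := by simpa using hb
    have hexp : exp (-(1 - log (Valued.v b))) < Valued.v b := by
      rw [← lt_log_iff_exp_lt hvb]
      simp
    exact ⟨1 - log (Valued.v b), trivial, fun x (hx : Valued.v x ≤ _) => hx.trans_lt hexp⟩
  · refine ⟨HahnSeries.single n 1, by simp, fun x (hx : Valued.v x < _) => ?_⟩
    rw [LaurentSeries.valuation_single_zpow] at hx
    exact hx.le

theorem tendsto_nhds_zero_iff_le_ord {ι : Type*} {l : Filter ι} {f : ι → LaurentSeries K} :
    Tendsto f l (𝓝 0) ↔ ∀ N : ℤ, ∀ᶠ i in l, f i = 0 ∨ N ≤ ord (f i) := by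
  simpa using hasBasis_nhds_zero_le_ord.tendsto_right_iff

theorem ord_mul_single_pow {x : LaurentSeries K} (hx : x ≠ 0) (n : ℤ) (i : ℕ) :
    ord (x * HahnSeries.single n 1 ^ i) = ord x + i * n := by
  rw [HahnSeries.single_pow, one_pow, ord, HahnSeries.order_mul hx (by simp),
    HahnSeries.order_single one_ne_zero, nsmul_eq_mul, ord]

theorem mul_single_pow_eq_zero_or_le_ord_iff (x : LaurentSeries K) (n N : ℤ) (i : ℕ) :
    (x * HahnSeries.single n 1 ^ i = 0 ∨ N ≤ ord (x * HahnSeries.single n 1 ^ i)) ↔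
      (x = 0 ∨ N ≤ ord x + i * n) := by
  obtain rfl | hx := eq_or_ne x 0
  · simp
  · rw [ord_mul_single_pow hx]
    simp [hx]

end LaurentSeries

end

/-- For a field `K`, `α ∈ ℤ`, and a sequence `(a_i)` in `K((t))`, the family
`(a_i yⁱ)_{i ∈ ℕ}` is summable for every `y ∈ t^α K[[t]]` if and only if
`ord (a_i) + iα → +∞`, i.e. for every `N` there is `I` such that for all `i ≥ I`,
either `a_i = 0` or `ord (a_i) + iα ≥ N`. -/
theorem stmt11 {K : Type*} [Field K] (α : ℤ) (a : ℕ → LaurentSeries K) :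
    (∀ y : LaurentSeries K, (y = 0 ∨ α ≤ ord y) → Summable (fun i : ℕ => a i * y ^ i)) ↔
    (∀ N : ℤ, ∃ I : ℕ, ∀ i ≥ I, a i = 0 ∨ N ≤ ord (a i) + (i : ℤ) * α) := by
  simpa only [LaurentSeries.valuation_single_zpow, valuation_le_exp_neg_iff_le_ord,
    tendsto_nhds_zero_iff_le_ord, mul_single_pow_eq_zero_or_le_ord_iff, Filter.eventually_atTop]
    using stmt11_general (HahnSeries.single α (1 : K) : LaurentSeries K) a
end
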